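/- arXiv:0812.0165 — 2 statements merged into one kernel-verified Lean document; each statement's English description precedes it below -/
import Mathlib

section
/- Let h be an even Schwartz function and a, β, Λ > 0. Then ∑_{(n,m)∈ℤ²} 2n(n+1)·h((n+1/2)²(Λa)^{-2} + (m+1/2)²(Λβ)^{-2}) = ∑_{(n,m)∈ℤ²} (-1)^{n+m} ĝ(n,m), where g(u,v) = 2(u² − 1/4)·h(u²(Λa)^{-2} + v²(Λβ)^{-2}) and ĝ is the 2-dimensional Fourier transform ĝ(x,y) = ∫_{ℝ²} g(u,v) e^{-2πi(xu+yv)} du dv. -/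
open MeasureTheory Complex

/-!
Periodising a continuous function `f` of sufficient decay over `ℤ^ι` gives a continuous function on
the torus, and unfolding the integral over the unit cube identifies its Fourier coefficients with
the values of `𝓕 f` at integer vectors. When these are summable, as they are for a Schwartz
function, the Fourier series converges pointwise to the periodisation; at the point `(1/2, …, 1/2)`
the characters take the values `(-1) ^ ∑ i, m i`. The spectral sum is the case of
`g (u, v) = 2 (u² - 1/4) h (A u² + B v²)`, since `2 n (n + 1) = 2 ((n + 1/2)² - 1/4)`; this `g` is
Schwartz because the quadratic form `A u² + B v²` is coercive.
-/

section Lattice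

variable {ι : Type*}

/-- The integer vector `n`, regarded as a point of `ℝ^ι`. -/
def intVec (n : ι → ℤ) : ι → ℝ := fun i => n i

/-- Reduction of a point of `ℝ^ι` modulo `ℤ^ι`. -/
def toTorus (x : ι → ℝ) : UnitAddTorus ι := fun i => x i

theorem intVec_add (m n : ι → ℤ) : intVec (m + n) = intVec m + intVec n := by
  ext i; simp [intVec]

theorem toTorus_add_intVec (x : ι → ℝ) (n : ι → ℤ) : toTorus (x + intVec n) = toTorus x := by
  ext i
  simp [toTorus, intVec]

theorem toTorus_eq_toTorus_iff {x y : ι → ℝ} :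
    toTorus x = toTorus y ↔ ∃ n : ι → ℤ, y = x + intVec n := by
  refine ⟨fun h => ?_, ?_⟩
  · have hcoord (i : ι) : ∃ k : ℤ, (k : ℝ) = y i - x i := by
      simpa [neg_add_eq_sub, AddSubgroup.mem_zmultiples_iff] using
        QuotientAddGroup.eq.1 (congrFun h i)
    choose n hn using hcoord
    exact ⟨n, funext fun i => by simp [intVec, hn]⟩
  · rintro ⟨n, rfl⟩
    exact (toTorus_add_intVec x n).symm

theorem isOpenQuotientMap_toTorus : IsOpenQuotientMap (toTorus : (ι → ℝ) → UnitAddTorus ι) :=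
  IsOpenQuotientMap.piMap fun _ => QuotientAddGroup.isOpenQuotientMap_mk

variable [Fintype ι]

theorem norm_intVec (n : ι → ℤ) : ‖intVec n‖ = ‖n‖ := by
  simp only [Pi.norm_def, intVec, ← norm_toNNReal, Int.norm_cast_real]

open Submodule in
theorem summable_int_pi_norm_rpow_neg {r : ℝ} (hr : Fintype.card ι < r) :
    Summable fun n : ι → ℤ => ‖n‖ ^ (-r) := by
  let b := Pi.basisFun ℝ ι
  let L := span ℤ (Set.range b)
  have hL : Summable fun z : L => ‖z‖ ^ (-r) :=
    ZLattice.summable_norm_rpow L (-r) (by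
      rw [Module.finrank_eq_card_basis (b.restrictScalars ℤ)]; linarith)
  have hcoe (n : ι → ℤ) : (((b.restrictScalars ℤ).equivFun.symm n : L) : ι → ℝ) = intVec n := by
    ext i
    classical simp [b, intVec, Module.Basis.equivFun_symm_apply, Pi.single_apply]
  have := (b.restrictScalars ℤ).equivFun.symm.toEquiv.summable_iff.2 hL
  simpa [Function.comp_def, ← norm_intVec, ← hcoe] using this

theorem summable_int_pi_one_add_norm_rpow_neg {r : ℝ} (hr : Fintype.card ι < r) :
    Summable fun n : ι → ℤ => (1 + ‖n‖) ^ (-r) := by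
  have hr0 : 0 < r := (Nat.cast_nonneg _).trans_lt hr
  refine .of_norm_bounded_eventually (summable_int_pi_norm_rpow_neg hr) ?_
  filter_upwards [(Set.finite_singleton (0 : ι → ℤ)).compl_mem_cofinite] with n hn
  rw [Real.norm_of_nonneg (by positivity)]
  exact Real.rpow_le_rpow_of_nonpos (norm_pos_iff.2 hn) (by linarith)
    (neg_nonpos.2 hr0.le)

end Lattice

section Unfolding

open Set UnitAddTorus

variable {ι F : Type*} [Fintype ι] [NormedAddCommGroup F] [NormedSpace ℝ F]

/-- The unit cube `(0, 1]^ι`, half-open so that its integer translates tile `ℝ^ι`. -/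
def unitCube (ι : Type*) : Set (ι → ℝ) := univ.pi fun _ => Ioc 0 1

theorem hasSum_integral_unitCube_add_intVec {f : (ι → ℝ) → F} (hf : Integrable f) :
    HasSum (fun n : ι → ℤ => ∫ x in unitCube ι, f (x + intVec n)) (∫ x, f x) := by
  let cube (n : ι → ℤ) : Set (ι → ℝ) := univ.pi fun i => Ioc (n i : ℝ) (n i + 1)
  have hmeas (n : ι → ℤ) : MeasurableSet (cube n) := .univ_pi fun i => measurableSet_Ioc
  have hdisj : Pairwise (Function.onFun Disjoint cube) := fun m n hmn => by
    obtain ⟨i, hi⟩ := Function.ne_iff.1 hmn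
    exact disjoint_univ_pi.2 ⟨i, pairwise_disjoint_Ioc_intCast ℝ hi⟩
  have hcover : ⋃ n, cube n = univ := by
    rw [iUnion_univ_pi fun _ (k : ℤ) => Ioc (k : ℝ) (k + 1)]
    simp [iUnion_Ioc_intCast]
  have htranslate (n : ι → ℤ) : ∫ x in unitCube ι, f (x + intVec n) = ∫ x in cube n, f x := by
    have hpreimage : (· + intVec n) ⁻¹' cube n = unitCube ι := by
      ext x
      simp [unitCube, cube, intVec, add_comm (x _)]
    rw [← hpreimage]
    exact (measurePreserving_add_right volume (intVec n)).setIntegral_preimage_emb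
      (measurableEmbedding_addRight _) f _
  simpa only [htranslate, hcover, setIntegral_univ] using
    hasSum_integral_iUnion hmeas hdisj hf.integrableOn

theorem integral_unitCube_tsum_add_intVec [CompleteSpace F] {f : (ι → ℝ) → F} (hf : Integrable f) :
    ∫ x in unitCube ι, ∑' n : ι → ℤ, f (x + intVec n) = ∫ x, f x := by
  rw [← integral_tsum_of_summable_integral_norm
    (fun n => (hf.comp_add_right (intVec n)).integrableOn)
    (hasSum_integral_unitCube_add_intVec hf.norm).summable]
  exact (hasSum_integral_unitCube_add_intVec hf).tsum_eq

theorem mFourierCoeff_eq_integral_of_comp_toTorus {f : (ι → ℝ) → ℂ} (hf : Integrable f)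
    {g : UnitAddTorus ι → ℂ} (hg : ∀ x, g (toTorus x) = ∑' n : ι → ℤ, f (x + intVec n))
    (m : ι → ℤ) :
    mFourierCoeff g m = ∫ x, mFourier (-m) (toTorus x) * f x := by
  have hint : Integrable fun x : ι → ℝ => mFourier (-m) (toTorus x) * f x :=
    hf.bdd_mul (c := 1) (((mFourier (-m)).continuous.comp
        isOpenQuotientMap_toTorus.continuous).aestronglyMeasurable)
      (.of_forall fun x => ((mFourier (-m)).norm_coe_le_norm _).trans mFourier_norm.le)
  calc mFourierCoeff g m
      = ∫ x in unitCube ι, mFourier (-m) (toTorus x) * g (toTorus x) := by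
        simpa [unitCube, Set.pi] using! mFourierCoeff_eq_integral g m 0
    _ = ∫ x in unitCube ι, ∑' n : ι → ℤ,
          mFourier (-m) (toTorus (x + intVec n)) * f (x + intVec n) := by
        simp_rw [toTorus_add_intVec, hg, tsum_mul_left]
    _ = ∫ x, mFourier (-m) (toTorus x) * f x := integral_unitCube_tsum_add_intVec hint

end Unfolding

section PoissonSummation

open UnitAddTorus

variable {ι F : Type*} [Fintype ι] [NormedAddCommGroup F] {f : (ι → ℝ) → F} {C r : ℝ}

theorem one_add_norm_rpow_neg_add_le {E : Type*} [SeminormedAddCommGroup E] (x y : E)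
    (hr : 0 ≤ r) : (1 + ‖x + y‖) ^ (-r) ≤ (1 + ‖x‖) ^ r * (1 + ‖y‖) ^ (-r) := by
  have htriangle : 1 + ‖y‖ ≤ (1 + ‖x‖) * (1 + ‖x + y‖) := by
    have := norm_sub_le (x + y) x
    rw [add_sub_cancel_left] at this
    nlinarith [norm_nonneg x, norm_nonneg (x + y)]
  rw [Real.rpow_neg (by positivity), Real.rpow_neg (by positivity), ← div_eq_mul_inv,
    inv_le_comm₀ (by positivity) (by positivity), inv_div, div_le_iff₀ (by positivity),
    mul_comm, ← Real.mul_rpow (by positivity) (by positivity)]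
  gcongr

theorem norm_add_intVec_le (hr : 0 ≤ r) (hf : ∀ x, ‖f x‖ ≤ C * (1 + ‖x‖) ^ (-r)) {R : ℝ}
    {x : ι → ℝ} (hx : ‖x‖ ≤ R) (n : ι → ℤ) :
    ‖f (x + intVec n)‖ ≤ C * (1 + R) ^ r * (1 + ‖n‖) ^ (-r) := by
  have hC : 0 ≤ C := by simpa using (norm_nonneg _).trans (hf 0)
  calc ‖f (x + intVec n)‖ ≤ C * ((1 + ‖x‖) ^ r * (1 + ‖n‖) ^ (-r)) := by
        grw [hf, one_add_norm_rpow_neg_add_le x _ hr, norm_intVec]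
    _ ≤ C * (1 + R) ^ r * (1 + ‖n‖) ^ (-r) := by
        rw [← mul_assoc]; gcongr

variable [CompleteSpace F]

theorem continuous_tsum_add_intVec (hc : Continuous f) (hr : Fintype.card ι < r)
    (hf : ∀ x, ‖f x‖ ≤ C * (1 + ‖x‖) ^ (-r)) :
    Continuous fun x => ∑' n : ι → ℤ, f (x + intVec n) := by
  have hr0 : 0 ≤ r := (Nat.cast_nonneg _).trans hr.le
  have hball (R : ℝ) : ContinuousOn (fun x => ∑' n : ι → ℤ, f (x + intVec n))
      (Metric.ball 0 R) :=
    continuousOn_tsum (fun n => by fun_prop) ((summable_int_pi_one_add_norm_rpow_neg hr).mul_left _)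
      fun n x hx => norm_add_intVec_le hr0 hf (mem_ball_zero_iff.1 hx).le n
  exact continuous_iff_continuousAt.2 fun x =>
    (hball (‖x‖ + 1)).continuousAt (Metric.isOpen_ball.mem_nhds (by simp))

theorem exists_comp_toTorus_eq_tsum_add_intVec (hc : Continuous f) (hr : Fintype.card ι < r)
    (hf : ∀ x, ‖f x‖ ≤ C * (1 + ‖x‖) ^ (-r)) :
    ∃ g : C(UnitAddTorus ι, F), ∀ x, g (toTorus x) = ∑' n : ι → ℤ, f (x + intVec n) := by
  let s : C(ι → ℝ, F) := ⟨_, continuous_tsum_add_intVec hc hr hf⟩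
  let p : C(ι → ℝ, UnitAddTorus ι) := ⟨toTorus, isOpenQuotientMap_toTorus.continuous⟩
  have hp : Topology.IsQuotientMap p := isOpenQuotientMap_toTorus.isQuotientMap
  have hperiodic : Function.FactorsThrough s p := fun x y hxy => by
    obtain ⟨m, rfl⟩ := toTorus_eq_toTorus_iff.1 hxy
    simpa [s, intVec_add, add_assoc] using
      ((Equiv.addLeft m).tsum_eq fun n => f (x + intVec n)).symm
  exact ⟨hp.lift s hperiodic, DFunLike.congr_fun (hp.lift_comp s hperiodic)⟩

theorem tsum_add_intVec_eq_tsum_mFourier {f : (ι → ℝ) → ℂ} (hc : Continuous f)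
    (hr : Fintype.card ι < r) (hf : ∀ x, ‖f x‖ ≤ C * (1 + ‖x‖) ^ (-r))
    (hs : Summable fun m : ι → ℤ => ∫ y, mFourier (-m) (toTorus y) * f y) (x : ι → ℝ) :
    ∑' n : ι → ℤ, f (x + intVec n) =
      ∑' m : ι → ℤ, (∫ y, mFourier (-m) (toTorus y) * f y) * mFourier m (toTorus x) := by
  obtain ⟨g, hg⟩ := exists_comp_toTorus_eq_tsum_add_intVec hc hr hf
  have hint : Integrable f :=
    ((integrable_one_add_norm (by simpa using hr)).const_mul C).mono' hc.aestronglyMeasurable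
      (.of_forall hf)
  simp_rw [← mFourierCoeff_eq_integral_of_comp_toTorus hint hg] at hs ⊢
  rw [← hg, ← (hasSum_mFourier_series_apply_of_summable hs (toTorus x)).tsum_eq]
  simp_rw [smul_eq_mul]

end PoissonSummation

section Schwartz

open UnitAddTorus WithLp
open scoped FourierTransform SchwartzMap

variable {ι F : Type*} [Fintype ι] [NormedAddCommGroup F] [NormedSpace ℝ F]

theorem mFourier_toTorus (m : ι → ℤ) (x : ι → ℝ) :
    mFourier m (toTorus x) = cexp (2 * Real.pi * I * ∑ i, m i * x i) := by
  simp [mFourier, toTorus, ← Complex.exp_sum, Finset.mul_sum, mul_assoc]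

theorem fourier_toLp_eq_integral (f : EuclideanSpace ℝ ι → ℂ) (w : ι → ℝ) :
    𝓕 f (toLp 2 w) =
      ∫ x : ι → ℝ, cexp (-2 * Real.pi * I * (∑ i, w i * x i : ℝ)) * f (toLp 2 x) := by
  rw [Real.fourier_eq', ← (PiLp.volume_preserving_toLp ι).integral_comp
    (MeasurableEquiv.toLp 2 (ι → ℝ)).measurableEmbedding]
  congr! 4
  simp [PiLp.inner_apply, mul_right_comm]

theorem fourier_toLp_intVec (f : EuclideanSpace ℝ ι → ℂ) (m : ι → ℤ) :
    𝓕 f (toLp 2 (intVec m)) = ∫ x, mFourier (-m) (toTorus x) * f (toLp 2 x) := by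
  simp [fourier_toLp_eq_integral, mFourier_toTorus, intVec]

theorem exists_norm_schwartz_le_one_add_norm_rpow_neg {E : Type*} [NormedAddCommGroup E]
    [NormedSpace ℝ E] (f : 𝓢(E, F)) (k : ℕ) :
    ∃ C : ℝ, ∀ x, ‖f x‖ ≤ C * (1 + ‖x‖) ^ (-(k : ℝ)) := by
  refine ⟨2 ^ k * (Finset.Iic (k, 0)).sup (fun m => SchwartzMap.seminorm ℝ m.1 m.2) f,
    fun x => ?_⟩
  rw [Real.rpow_neg (by positivity), Real.rpow_natCast, ← div_eq_mul_inv,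
    le_div_iff₀' (by positivity), ← norm_iteratedFDeriv_zero (𝕜 := ℝ)]
  exact SchwartzMap.one_add_le_sup_seminorm_apply (m := (k, 0)) le_rfl le_rfl f x

/-- A Schwartz function on Euclidean space, viewed on `ι → ℝ`, whose norm is the sup norm. -/
noncomputable def schwartzPi (f : 𝓢(EuclideanSpace ℝ ι, F)) : 𝓢(ι → ℝ, F) :=
  SchwartzMap.compCLMOfContinuousLinearEquiv ℝ (EuclideanSpace.equiv ι ℝ).symm f

theorem schwartzPi_apply (f : 𝓢(EuclideanSpace ℝ ι, F)) (x : ι → ℝ) :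
    schwartzPi f x = f (toLp 2 x) := rfl

theorem summable_schwartz_intVec [CompleteSpace F] (f : 𝓢(ι → ℝ, F)) :
    Summable fun n : ι → ℤ => f (intVec n) := by
  obtain ⟨C, hC⟩ := exists_norm_schwartz_le_one_add_norm_rpow_neg f (Fintype.card ι + 1)
  refine .of_norm_bounded ((summable_int_pi_one_add_norm_rpow_neg
    (Nat.cast_lt.2 (Nat.lt_succ_self _))).mul_left C) fun n => ?_
  simpa only [norm_intVec] using hC (intVec n)

theorem tsum_schwartz_add_intVec_eq_tsum_fourier (f : 𝓢(EuclideanSpace ℝ ι, ℂ)) (x : ι → ℝ) :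
    ∑' n : ι → ℤ, f (toLp 2 (x + intVec n)) =
      ∑' m : ι → ℤ, 𝓕 f (toLp 2 (intVec m)) * mFourier m (toTorus x) := by
  obtain ⟨C, hC⟩ :=
    exists_norm_schwartz_le_one_add_norm_rpow_neg (schwartzPi f) (Fintype.card ι + 1)
  have hs := summable_schwartz_intVec (schwartzPi (𝓕 f))
  simp_rw [schwartzPi_apply, SchwartzMap.fourier_coe, fourier_toLp_intVec] at hs ⊢
  exact tsum_add_intVec_eq_tsum_mFourier (schwartzPi f).continuous
    (Nat.cast_lt.2 (Nat.lt_succ_self _)) hC hs x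

theorem mFourier_toTorus_half (m : ι → ℤ) :
    mFourier m (toTorus fun _ => 1 / 2) = (-1) ^ ∑ i, m i := by
  rw [mFourier_toTorus, ← exp_pi_mul_I, ← exp_int_mul, ← Finset.sum_mul]
  congr 1
  push_cast
  ring

end Schwartz

section DiagonalQuadratic

open WithLp Function
open scoped SchwartzMap

theorem norm_le_mul_one_add_norm_of_norm_sq_le {E : Type*} [SeminormedAddCommGroup E] {q : E → ℝ}
    {c : ℝ} (hc : 0 ≤ c) (hq : ∀ x, ‖x‖ ^ 2 ≤ c * q x) (x : E) :
    ‖x‖ ≤ (1 + c) * (1 + ‖q x‖) := by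
  have hnorm : ‖x‖ ≤ 1 + ‖x‖ ^ 2 := by nlinarith [sq_nonneg (‖x‖ - 1)]
  have habs : c * q x ≤ c * ‖q x‖ := by gcongr; exact Real.le_norm_self _
  nlinarith [hq x, norm_nonneg (q x)]

variable {ι F : Type*} [Fintype ι] [NormedAddCommGroup F] [NormedSpace ℝ F] {A : ι → ℝ}

theorem hasTemperateGrowth_sum_sq_mul (A : ι → ℝ) :
    HasTemperateGrowth fun x : EuclideanSpace ℝ ι => ∑ i, x i ^ 2 * A i :=
  .sum fun i _ => ((EuclideanSpace.proj (𝕜 := ℝ) i).hasTemperateGrowth.pow 2).mul (.const (A i))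

theorem norm_sq_le_sum_inv_mul_sum_sq_mul (hA : ∀ i, 0 < A i) (x : EuclideanSpace ℝ ι) :
    ‖x‖ ^ 2 ≤ (∑ i, (A i)⁻¹) * ∑ i, x i ^ 2 * A i := by
  have hinv (i : ι) : 0 ≤ (A i)⁻¹ := (inv_pos.2 (hA i)).le
  rw [EuclideanSpace.real_norm_sq_eq, Finset.mul_sum]
  refine Finset.sum_le_sum fun i _ => ?_
  calc x i ^ 2 = (A i)⁻¹ * (x i ^ 2 * A i) := by field_simp [(hA i).ne']
    _ ≤ (∑ j, (A j)⁻¹) * (x i ^ 2 * A i) :=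
      mul_le_mul_of_nonneg_right
        (Finset.single_le_sum (fun j _ => hinv j) (Finset.mem_univ i))
        (mul_nonneg (sq_nonneg _) (hA i).le)

/-- The Schwartz function `x ↦ h (∑ i, Aᵢ xᵢ²)` on Euclidean space, for positive coefficients. -/
noncomputable def schwartzCompSumSqMul (h : 𝓢(ℝ, F)) (hA : ∀ i, 0 < A i) :
    𝓢(EuclideanSpace ℝ ι, F) :=
  SchwartzMap.compCLM ℝ (hasTemperateGrowth_sum_sq_mul A)
    ⟨1, 1 + ∑ i, (A i)⁻¹, fun x => by
      rw [pow_one]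
      exact norm_le_mul_one_add_norm_of_norm_sq_le
        (Finset.sum_nonneg fun i _ => (inv_pos.2 (hA i)).le)
        (norm_sq_le_sum_inv_mul_sum_sq_mul hA) x⟩ h

theorem schwartzCompSumSqMul_apply (h : 𝓢(ℝ, F)) (hA : ∀ i, 0 < A i) (x : EuclideanSpace ℝ ι) :
    schwartzCompSumSqMul h hA x = h (∑ i, x i ^ 2 * A i) := rfl

end DiagonalQuadratic

section Plane

open WithLp Function
open scoped FourierTransform SchwartzMap

theorem integral_finTwo_eq {F : Type*} [NormedAddCommGroup F] [NormedSpace ℝ F]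
    {f : (Fin 2 → ℝ) → F} (hf : Integrable f) : ∫ x, f x = ∫ u : ℝ, ∫ v : ℝ, f ![u, v] := by
  have hmp := (volume_preserving_finTwoArrow ℝ).symm
  have hme := (MeasurableEquiv.finTwoArrow (α := ℝ)).symm.measurableEmbedding
  rw [← hmp.integral_comp hme, Measure.volume_eq_prod,
    integral_prod (fun p => f (MeasurableEquiv.finTwoArrow.symm p))
      ((hmp.integrable_comp_emb hme).2 hf)]
  rfl

theorem fourier_finTwo_eq (f : 𝓢(EuclideanSpace ℝ (Fin 2), ℂ)) (x y : ℝ) :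
    𝓕 f !₂[x, y] = ∫ u : ℝ, ∫ v : ℝ, f !₂[u, v] * cexp (-2 * Real.pi * I * (x * u + y * v)) := by
  have hint : Integrable fun z : Fin 2 → ℝ =>
      cexp (-2 * Real.pi * I * (∑ i, ![x, y] i * z i : ℝ)) * f (toLp 2 z) :=
    (schwartzPi f).integrable.bdd_mul (c := 1)
      (Continuous.aestronglyMeasurable (by fun_prop)) (.of_forall fun z => by simp [norm_exp])
  rw [SchwartzMap.fourier_coe, fourier_toLp_eq_integral, integral_finTwo_eq hint]
  simp [Fin.sum_univ_two, mul_comm]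

theorem tsum_schwartz_add_half_eq_tsum_fourier (f : 𝓢(EuclideanSpace ℝ (Fin 2), ℂ)) :
    ∑' p : ℤ × ℤ, f !₂[p.1 + 1 / 2, p.2 + 1 / 2] =
      ∑' p : ℤ × ℤ, (-1 : ℂ) ^ (p.1 + p.2) *
        ∫ u : ℝ, ∫ v : ℝ, f !₂[u, v] * cexp (-2 * Real.pi * I * (p.1 * u + p.2 * v)) := by
  have hpoisson := tsum_schwartz_add_intVec_eq_tsum_fourier f fun _ => 1 / 2
  rw [← (finTwoArrowEquiv ℤ).symm.tsum_eq, ← (finTwoArrowEquiv ℤ).symm.tsum_eq] at hpoisson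
  convert hpoisson using 3 with p p
  · congr 1
    ext i
    fin_cases i <;> simp [intVec, add_comm]
  · have hcast : intVec ((finTwoArrowEquiv ℤ).symm p) = ![(p.1 : ℝ), (p.2 : ℝ)] := by
      ext i
      fin_cases i <;> rfl
    rw [mFourier_toTorus_half, mul_comm, hcast, fourier_finTwo_eq]
    simp

/-- The function `g (u, v) = 2 (u² - 1/4) h (A u² + B v²)`, whose values at half-integer points are
the terms of the spectral sum; `A = (Λa)⁻²` and `B = (Λβ)⁻²` for `S³_a × S¹_β`. -/
noncomputable def spectralDensity (h : 𝓢(ℝ, ℂ)) {A B : ℝ} (hA : 0 < A) (hB : 0 < B) :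
    𝓢(EuclideanSpace ℝ (Fin 2), ℂ) :=
  SchwartzMap.smulLeftCLM ℂ (fun x : EuclideanSpace ℝ (Fin 2) => 2 * ((x 0 : ℂ) ^ 2 - 1 / 4))
    (schwartzCompSumSqMul h (A := ![A, B]) (Fin.forall_fin_two.2 ⟨hA, hB⟩))

theorem spectralDensity_apply (h : 𝓢(ℝ, ℂ)) {A B : ℝ} (hA : 0 < A) (hB : 0 < B) (u v : ℝ) :
    spectralDensity h hA hB !₂[u, v] =
      2 * ((u : ℂ) ^ 2 - 1 / 4) * h (u ^ 2 * A + v ^ 2 * B) := by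
  have hproj : HasTemperateGrowth fun x : EuclideanSpace ℝ (Fin 2) => (x 0 : ℂ) :=
    (ofRealCLM.comp (EuclideanSpace.proj (𝕜 := ℝ) (0 : Fin 2))).hasTemperateGrowth
  have hweight : HasTemperateGrowth
      fun x : EuclideanSpace ℝ (Fin 2) => 2 * ((x 0 : ℂ) ^ 2 - 1 / 4) :=
    (HasTemperateGrowth.const 2).mul ((hproj.pow 2).sub (.const (1 / 4)))
  rw [spectralDensity, SchwartzMap.smulLeftCLM_apply_apply hweight, schwartzCompSumSqMul_apply]
  simp [Fin.sum_univ_two]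

end Plane

theorem poisson_S3xS1_general (h : SchwartzMap ℝ ℂ) {A B : ℝ} (hA : 0 < A) (hB : 0 < B) :
    ∑' p : ℤ × ℤ, 2 * (p.1 : ℂ) * ((p.1 : ℂ) + 1) *
        h (((p.1 : ℝ) + 1 / 2) ^ 2 * A + ((p.2 : ℝ) + 1 / 2) ^ 2 * B) =
      ∑' p : ℤ × ℤ, (-1 : ℂ) ^ (p.1 + p.2) *
        ∫ u : ℝ, ∫ v : ℝ,
          2 * ((u : ℂ) ^ 2 - 1 / 4) * h (u ^ 2 * A + v ^ 2 * B) *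
            Complex.exp (-2 * Real.pi * Complex.I * ((p.1 : ℂ) * u + (p.2 : ℂ) * v)) := by
  have hmultiplicity (n : ℤ) :
      2 * (n : ℂ) * (n + 1) = 2 * (((n + 1 / 2 : ℝ) : ℂ) ^ 2 - 1 / 4) := by
    push_cast; ring
  simp_rw [hmultiplicity, ← spectralDensity_apply h hA hB]
  exact tsum_schwartz_add_half_eq_tsum_fourier (spectralDensity h hA hB)

/-- 2-dimensional Poisson summation applied to the spectral action on
`S³_a × S¹_β`: with `g(u,v) = 2(u² - 1/4) h(u²(Λa)⁻² + v²(Λβ)⁻²)`,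
`∑_{(n,m)∈ℤ²} g(n+1/2, m+1/2) = ∑_{(n,m)∈ℤ²} (-1)^{n+m} ĝ(n,m)`. -/
theorem poisson_S3xS1 (h : SchwartzMap ℝ ℂ) (hh : ∀ x : ℝ, h (-x) = h x)
    (a β Λ : ℝ) (ha : 0 < a) (hβ : 0 < β) (hΛ : 0 < Λ) :
    ∑' p : ℤ × ℤ, 2 * (p.1 : ℂ) * ((p.1 : ℂ) + 1) *
        h (((p.1 : ℝ) + 1 / 2) ^ 2 * (Λ * a) ^ (-2 : ℤ)
            + ((p.2 : ℝ) + 1 / 2) ^ 2 * (Λ * β) ^ (-2 : ℤ)) =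
      ∑' p : ℤ × ℤ, (-1 : ℂ) ^ (p.1 + p.2) *
        ∫ u : ℝ, ∫ v : ℝ,
          2 * ((u : ℂ) ^ 2 - 1 / 4) *
            h (u ^ 2 * (Λ * a) ^ (-2 : ℤ) + v ^ 2 * (Λ * β) ^ (-2 : ℤ)) *
            Complex.exp (-2 * Real.pi * Complex.I * ((p.1 : ℂ) * u + (p.2 : ℂ) * v)) :=
  poisson_S3xS1_general h (by positivity) (by positivity)
end

section
/- Let h be a Schwartz function on ℝ. Then for S³_a × S¹_β there exist, for every k > 0, constants such that Tr(h(D²/Λ²)) = 2πΛ⁴βa³ ∫_0^∞ h(ρ²)ρ³ dρ − πΛ²βa ∫_0^∞ h(ρ²)ρ dρ + ε(Λ) with |ε(Λ)| = O(Λ^{-k}) as Λ → ∞. -/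
open MeasureTheory

/-!
With `x = (n + 1/2) / (Λa)` the multiplicity is `2n(n+1) = 2(Λa)² x² - 1/2`, so the trace is a
combination of sums of the Schwartz functions `x² h(x² + y²)` and `h(x² + y²)` over a scaled and
shifted lattice in the plane. By Poisson summation in one variable at a time, each such sum agrees
with the corresponding integral up to an error smaller than every power of `Λ`: the nonzero
frequencies are multiples of `Λ`, where the Fourier transform of a Schwartz function is negligible.
In polar coordinates the two integrals become the `ρ³` and `ρ` integrals of the expansion.
-/

open Set
open scoped SchwartzMap FourierTransform

section SchwartzDecay

variable {V E : Type*} [NormedAddCommGroup V] [NormedSpace ℝ V]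
  [NormedAddCommGroup E] [NormedSpace ℝ E]

lemma exists_norm_iteratedFDeriv_le_inv_one_add_sq_pow (f : 𝓢(V, E)) (N k : ℕ) :
    ∃ C : ℝ, 0 ≤ C ∧ ∀ x, ‖iteratedFDeriv ℝ N f x‖ ≤ C * (1 + ‖x‖ ^ 2)⁻¹ ^ k := by
  refine ⟨2 ^ (2 * k) * (Finset.Iic (2 * k, N)).sup (fun m ↦ SchwartzMap.seminorm ℝ m.1 m.2) f,
    by positivity, fun x ↦ ?_⟩
  have hweight : (1 + ‖x‖ ^ 2) ^ k ≤ (1 + ‖x‖) ^ (2 * k) := by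
    rw [pow_mul]
    gcongr
    nlinarith [norm_nonneg x]
  rw [inv_pow, ← div_eq_mul_inv, le_div_iff₀' (by positivity)]
  exact (mul_le_mul_of_nonneg_right hweight (norm_nonneg _)).trans
    (SchwartzMap.one_add_le_sup_seminorm_apply (𝕜 := ℝ) (m := (2 * k, N)) le_rfl le_rfl f x)

lemma integrable_schwartz_of_integrable_inv_one_add_sq (g : 𝓢(ℝ, E)) {μ : Measure ℝ}
    (hμ : Integrable (fun x : ℝ ↦ (1 + x ^ 2)⁻¹) μ) : Integrable g μ := by
  obtain ⟨C, -, hC⟩ := exists_norm_iteratedFDeriv_le_inv_one_add_sq_pow g 0 1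
  refine (hμ.const_mul C).mono' g.continuous.aestronglyMeasurable (.of_forall fun x ↦ ?_)
  simpa using hC x

lemma integrable_iteratedDeriv_schwartz (g : 𝓢(ℝ, E)) (N : ℕ) : Integrable (iteratedDeriv N g) := by
  obtain ⟨C, -, hC⟩ := exists_norm_iteratedFDeriv_le_inv_one_add_sq_pow g N 1
  refine (integrable_inv_one_add_sq.const_mul C).mono'
    ((g.smooth N).continuous_iteratedDeriv N le_rfl).aestronglyMeasurable (.of_forall fun x ↦ ?_)
  simpa [norm_iteratedFDeriv_eq_norm_iteratedDeriv] using hC x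

lemma summable_inv_one_add_int_add_sq (θ : ℝ) : Summable fun n : ℤ ↦ (1 + (n + θ) ^ 2)⁻¹ := by
  refine ((Real.summable_one_div_int_add_rpow θ 2).mpr one_lt_two).of_norm_bounded_eventually ?_
  have hzero : {n : ℤ | (n : ℝ) + θ = 0}.Subsingleton := fun m hm n hn ↦ by
    exact_mod_cast add_right_cancel (hm.trans hn.symm)
  filter_upwards [hzero.finite.compl_mem_cofinite] with n hn
  have hpos : 0 < ((n : ℝ) + θ) ^ 2 := sq_pos_of_ne_zero hn
  rw [Real.norm_of_nonneg (by positivity), Real.rpow_two, sq_abs, one_div]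
  gcongr
  linarith

lemma summable_schwartz_int_add [CompleteSpace E] (g : 𝓢(ℝ, E)) (θ : ℝ) :
    Summable fun n : ℤ ↦ g (n + θ) := by
  obtain ⟨C, -, hC⟩ := exists_norm_iteratedFDeriv_le_inv_one_add_sq_pow g 0 1
  exact .of_norm_bounded ((summable_inv_one_add_int_add_sq θ).mul_left C) fun n ↦ by
    simpa using hC (n + θ)

end SchwartzDecay

section Poisson

lemma abs_pow_mul_norm_fourier_le (g : 𝓢(ℝ, ℂ)) (N : ℕ) (ξ : ℝ) :
    |ξ| ^ N * ‖𝓕 g ξ‖ ≤ ∫ t, ‖iteratedDeriv N g t‖ := by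
  have hfourier := congrFun (Real.fourier_iteratedDeriv (N := N) (g.smooth N)
    (fun n _ ↦ integrable_iteratedDeriv_schwartz g n) le_rfl) ξ
  have hξ : |ξ| ≤ ‖2 * Real.pi * Complex.I * (ξ : ℂ)‖ := by
    simp only [norm_mul, Complex.norm_I, Complex.norm_real, Real.norm_eq_abs, mul_one,
      Complex.norm_ofNat, abs_of_pos Real.pi_pos]
    nlinarith [Real.pi_gt_three, abs_nonneg ξ]
  calc |ξ| ^ N * ‖𝓕 g ξ‖ ≤ ‖2 * Real.pi * Complex.I * (ξ : ℂ)‖ ^ N * ‖𝓕 g ξ‖ := by gcongr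
    _ = ‖𝓕 (iteratedDeriv N g) ξ‖ := by
      rw [hfourier, norm_smul, norm_pow, SchwartzMap.fourier_coe]
    _ ≤ ∫ t, ‖iteratedDeriv N g t‖ := VectorFourier.norm_fourierIntegral_le_integral_norm ..

lemma norm_tsum_int_add_sub_integral_le_of_complex (g : 𝓢(ℝ, ℂ)) {N : ℕ} (hN : 1 < N) (θ : ℝ) :
    ‖∑' n : ℤ, g (n + θ) - ∫ t, g t‖ ≤
      (∑' n : ℤ, |1 / (n : ℝ) ^ N|) * ∫ t, ‖iteratedDeriv N g t‖ := by
  set J := ∫ t, ‖iteratedDeriv N g t‖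
  set c : ℤ → ℂ := fun n ↦ 𝓕 g n * fourier n (θ : UnitAddCircle)
  have hmajorant : Summable fun n : ℤ ↦ |1 / (n : ℝ) ^ N| * J :=
    (Real.summable_one_div_int_pow.mpr hN).abs.mul_right J
  have hpoisson : ∑' n : ℤ, g (n + θ) = ∑' n, c n := by
    simp_rw [c, ← SchwartzMap.tsum_eq_tsum_fourier, add_comm]
  have hc (n : ℤ) (hn : n ≠ 0) : ‖c n‖ ≤ |1 / (n : ℝ) ^ N| * J := by
    have hn' : 0 < |(n : ℝ)| ^ N := by positivity
    rw [abs_div, abs_one, abs_pow, one_div_mul_eq_div, le_div_iff₀' hn']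
    simpa only [c, norm_mul, fourier_apply, Circle.norm_coe, mul_one] using
      abs_pow_mul_norm_fourier_le g N n
  have hsummable : Summable c := hmajorant.of_norm_bounded_eventually <| by
    filter_upwards [(finite_singleton (0 : ℤ)).compl_mem_cofinite] with n hn using hc n hn
  have hc_zero : c 0 = ∫ t, g t := by
    simp [c, SchwartzMap.fourier_coe, Real.fourier_eq]
  rw [hpoisson, hsummable.tsum_eq_add_tsum_ite 0, hc_zero, add_sub_cancel_left, ← tsum_mul_right]
  refine tsum_of_norm_bounded hmajorant.hasSum fun n ↦ ?_
  split_ifs with h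
  · simp only [norm_zero]; positivity
  · exact hc n h

variable {E : Type*} [NormedAddCommGroup E] [NormedSpace ℝ E] [CompleteSpace E]

lemma norm_tsum_int_add_sub_integral_le (g : 𝓢(ℝ, E)) {N : ℕ} (hN : 1 < N) (θ : ℝ) :
    ‖∑' n : ℤ, g (n + θ) - ∫ t, g t‖ ≤
      (∑' n : ℤ, |1 / (n : ℝ) ^ N|) * ∫ t, ‖iteratedDeriv N g t‖ := by
  refine NormedSpace.norm_le_dual_bound ℝ _ (by positivity) fun ℓ ↦ ?_
  set L : E →L[ℝ] ℂ := Complex.ofRealCLM ∘L ℓ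
  have hL : ‖L‖ ≤ ‖ℓ‖ := by
    refine L.opNorm_le_bound (norm_nonneg ℓ) fun x ↦ ?_
    simpa [L] using ℓ.le_opNorm x
  have hderiv (t : ℝ) : ‖iteratedDeriv N (g.postcompCLM L) t‖ ≤ ‖ℓ‖ * ‖iteratedDeriv N g t‖ := by
    simp only [← norm_iteratedFDeriv_eq_norm_iteratedDeriv]
    exact (L.norm_iteratedFDeriv_comp_left (g.smooth N).contDiffAt le_rfl).trans (by gcongr)
  have hsum : L (∑' n : ℤ, g (n + θ)) = ∑' n : ℤ, g.postcompCLM L (n + θ) :=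
    L.map_tsum (summable_schwartz_int_add g θ)
  have hint : L (∫ t, g t) = ∫ t, g.postcompCLM L t := (L.integral_comp_comm g.integrable).symm
  calc ‖ℓ (∑' n : ℤ, g (n + θ) - ∫ t, g t)‖
      = ‖∑' n : ℤ, g.postcompCLM L (n + θ) - ∫ t, g.postcompCLM L t‖ := by
        rw [← hsum, ← hint, ← map_sub]
        exact (Complex.norm_real _).symm
    _ ≤ (∑' n : ℤ, |1 / (n : ℝ) ^ N|) * ∫ t, ‖iteratedDeriv N (g.postcompCLM L) t‖ :=
        norm_tsum_int_add_sub_integral_le_of_complex _ hN θ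
    _ ≤ (∑' n : ℤ, |1 / (n : ℝ) ^ N|) * (‖ℓ‖ * ∫ t, ‖iteratedDeriv N g t‖) := by
        rw [← integral_const_mul ‖ℓ‖]
        exact mul_le_mul_of_nonneg_left (integral_mono (integrable_iteratedDeriv_schwartz _ N).norm
          ((integrable_iteratedDeriv_schwartz g N).norm.const_mul _) hderiv) (by positivity)
    _ = _ := by ring

lemma norm_tsum_int_add_div_sub_integral_le (g : 𝓢(ℝ, E)) {N : ℕ} (hN : 1 < N) (θ : ℝ) {A : ℝ}
    (hA : 0 < A) :
    ‖∑' n : ℤ, g ((n + θ) / A) - A • ∫ t, g t‖ ≤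
      (∑' n : ℤ, |1 / (n : ℝ) ^ N|) * (A * A⁻¹ ^ N) * ∫ t, ‖iteratedDeriv N g t‖ := by
  set gA : 𝓢(ℝ, E) := SchwartzMap.compCLMOfContinuousLinearEquiv ℝ
    (ContinuousLinearEquiv.smulLeft (Units.mk0 A⁻¹ (inv_ne_zero hA.ne'))) g
  have hgA : ⇑gA = fun t ↦ g (A⁻¹ * t) := rfl
  have hderiv : iteratedDeriv N gA = fun t ↦ A⁻¹ ^ N • iteratedDeriv N g (A⁻¹ * t) := by
    rw [hgA, iteratedDeriv_comp_const_smul (g.smooth N)]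
  have hbound := norm_tsum_int_add_sub_integral_le gA hN θ
  rw [hderiv] at hbound
  simp only [hgA, norm_smul, integral_const_mul] at hbound
  rw [Measure.integral_comp_inv_mul_left g,
    Measure.integral_comp_inv_mul_left (fun t ↦ ‖iteratedDeriv N g t‖), abs_of_pos hA,
    Real.norm_of_nonneg (by positivity), smul_eq_mul] at hbound
  simp only [div_eq_inv_mul _ A]
  exact hbound.trans_eq (by ring)

end Poisson

section LatticeMeasure

/-- Counting measure on the scaled shifted lattice `A⁻¹(ℤ + θ)`. Lattice sums become integrals, so
that Fubini's theorem treats sums and integrals alike. -/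
noncomputable def latticeMeasure (θ A : ℝ) : Measure ℝ :=
  Measure.count.map fun n : ℤ ↦ (n + θ) / A

instance (θ A : ℝ) : SFinite (latticeMeasure θ A) := by
  unfold latticeMeasure
  infer_instance

lemma count_prod_count {ι κ : Type*} [Countable ι] [Countable κ] [MeasurableSpace ι]
    [MeasurableSpace κ] [MeasurableSingletonClass ι] [MeasurableSingletonClass κ] :
    (Measure.count : Measure ι).prod (Measure.count : Measure κ) = Measure.count := by
  refine Measure.ext_of_singleton fun p ↦ ?_
  rw [← singleton_prod_singleton, Measure.prod_prod]
  simp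

lemma latticeMeasure_prod (θ₁ θ₂ A B : ℝ) :
    (latticeMeasure θ₁ A).prod (latticeMeasure θ₂ B) =
      Measure.count.map fun p : ℤ × ℤ ↦ ((p.1 + θ₁) / A, (p.2 + θ₂) / B) := by
  unfold latticeMeasure
  rw [Measure.map_prod_map _ _ .of_discrete .of_discrete, count_prod_count]
  rfl

lemma hasSum_of_integrable_map_count {ι X E : Type*} [Countable ι] [MeasurableSpace ι]
    [MeasurableSingletonClass ι] [MeasurableSpace X] [NormedAddCommGroup E] [NormedSpace ℝ E]
    [CompleteSpace E] {φ : ι → X} {g : X → E} (hg : Integrable g (Measure.count.map φ)) :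
    HasSum (fun i ↦ g (φ i)) (∫ x, g x ∂Measure.count.map φ) := by
  have hφ : AEMeasurable φ Measure.count := Measurable.of_discrete.aemeasurable
  have hgφ : Integrable (fun i ↦ g (φ i)) Measure.count := hg.comp_aemeasurable hφ
  rw [integral_map hφ hg.aestronglyMeasurable, integral_countable hgφ]
  simpa using (integrable_count_iff.mp hgφ).of_norm.hasSum

lemma inv_one_add_div_sq_le (t : ℝ) {A : ℝ} (hA : A ≠ 0) :
    (1 + (t / A) ^ 2)⁻¹ ≤ (1 + A ^ 2) * (1 + t ^ 2)⁻¹ := by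
  have hA2 : 0 < A ^ 2 := by positivity
  rw [← div_eq_mul_inv, inv_le_comm₀ (by positivity) (by positivity), inv_div,
    div_le_iff₀ (by positivity)]
  calc 1 + t ^ 2 ≤ (1 + A ^ 2) * (1 + t ^ 2 / A ^ 2) := by
        have : A ^ 2 * (t ^ 2 / A ^ 2) = t ^ 2 := by field_simp
        nlinarith [div_nonneg (sq_nonneg t) hA2.le]
    _ = _ := by rw [div_pow, mul_comm]

lemma integrable_inv_one_add_sq_latticeMeasure (θ : ℝ) {A : ℝ} (hA : A ≠ 0) :
    Integrable (fun x : ℝ ↦ (1 + x ^ 2)⁻¹) (latticeMeasure θ A) := by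
  refine (integrable_map_measure (by fun_prop) Measurable.of_discrete.aemeasurable).mpr
    (integrable_count_iff.mpr ?_)
  refine .of_norm_bounded ((summable_inv_one_add_int_add_sq θ).mul_left (1 + A ^ 2)) fun n ↦ ?_
  simpa [abs_of_nonneg, add_nonneg, sq_nonneg] using inv_one_add_div_sq_le _ hA

lemma integral_inv_one_add_sq_latticeMeasure_le (θ : ℝ) {A : ℝ} (hA : A ≠ 0) :
    ∫ x, (1 + x ^ 2)⁻¹ ∂latticeMeasure θ A ≤
      (1 + A ^ 2) * ∑' n : ℤ, (1 + (n + θ) ^ 2)⁻¹ :=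
  hasSum_le (fun n : ℤ ↦ inv_one_add_div_sq_le (n + θ) hA)
    (hasSum_of_integrable_map_count (integrable_inv_one_add_sq_latticeMeasure θ hA))
    ((summable_inv_one_add_int_add_sq θ).hasSum.mul_left _)

lemma norm_integral_latticeMeasure_sub_smul_integral_le {E : Type*} [NormedAddCommGroup E]
    [NormedSpace ℝ E] [CompleteSpace E] (g : 𝓢(ℝ, E)) {N : ℕ} (hN : 1 < N) (θ : ℝ) {A : ℝ}
    (hA : 0 < A) :
    ‖∫ t, g t ∂latticeMeasure θ A - A • ∫ t, g t‖ ≤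
      (∑' n : ℤ, |1 / (n : ℝ) ^ N|) * (A * A⁻¹ ^ N) * ∫ t, ‖iteratedDeriv N g t‖ := by
  have hg := integrable_schwartz_of_integrable_inv_one_add_sq g
    (integrable_inv_one_add_sq_latticeMeasure θ hA.ne')
  rw [latticeMeasure, ← (hasSum_of_integrable_map_count hg).tsum_eq]
  exact norm_tsum_int_add_div_sub_integral_le g hN θ hA

end LatticeMeasure

section Slice

variable {V W E : Type*} [NormedAddCommGroup V] [NormedSpace ℝ V] [NormedAddCommGroup W]
  [NormedSpace ℝ W] [NormedAddCommGroup E] [NormedSpace ℝ E]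

/-- The slice `y ↦ F (x, y)` of a Schwartz function on a product, as a Schwartz function, so
that one-dimensional Poisson summation applies to each variable in turn. -/
noncomputable def schwartzSlice (F : 𝓢(V × W, E)) (x : V) : 𝓢(W, E) :=
  SchwartzMap.compCLMOfAntilipschitz ℝ (K := 1)
    (g := fun y ↦ (x, 0) + ContinuousLinearMap.inr ℝ V W y) (by fun_prop)
    (AntilipschitzWith.of_le_mul_dist fun y z ↦ by simp [Prod.dist_eq]) F

@[simp]
lemma schwartzSlice_apply (F : 𝓢(V × W, E)) (x : V) (y : W) : schwartzSlice F x y = F (x, y) := by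
  simp [schwartzSlice]

lemma norm_iteratedFDeriv_schwartzSlice_le (F : 𝓢(V × W, E)) (x : V) (N : ℕ) (y : W) :
    ‖iteratedFDeriv ℝ N (schwartzSlice F x) y‖ ≤ ‖iteratedFDeriv ℝ N F (x, y)‖ := by
  have hsmooth : ContDiff ℝ N fun z ↦ F ((x, 0) + z) := (F.smooth N).comp (by fun_prop)
  have hslice : ⇑(schwartzSlice F x) =
      (fun z ↦ F ((x, 0) + z)) ∘ ContinuousLinearMap.inr ℝ V W := rfl
  rw [hslice, ContinuousLinearMap.iteratedFDeriv_comp_right _ hsmooth _ le_rfl,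
    iteratedFDeriv_comp_add_left]
  refine (ContinuousMultilinearMap.norm_compContinuousLinearMap_le _ _).trans ?_
  simpa using mul_le_of_le_one_right (norm_nonneg _)
    (pow_le_one₀ (norm_nonneg _) (ContinuousLinearMap.norm_inr_le_one ℝ V W))

end Slice

section Plane

variable {E : Type*} [NormedAddCommGroup E] [NormedSpace ℝ E]

lemma exists_norm_iteratedFDeriv_le_mul_inv_one_add_sq (F : 𝓢(ℝ × ℝ, E)) (N : ℕ) :
    ∃ C : ℝ, 0 ≤ C ∧ ∀ x y : ℝ,
      ‖iteratedFDeriv ℝ N F (x, y)‖ ≤ C * ((1 + x ^ 2)⁻¹ * (1 + y ^ 2)⁻¹) := by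
  obtain ⟨C, hC, hF⟩ := exists_norm_iteratedFDeriv_le_inv_one_add_sq_pow F N 2
  refine ⟨C, hC, fun x y ↦ (hF (x, y)).trans ?_⟩
  have hx : x ^ 2 ≤ ‖(x, y)‖ ^ 2 := by
    simpa [sq_abs] using pow_le_pow_left₀ (norm_nonneg _) (norm_fst_le (x, y)) 2
  have hy : y ^ 2 ≤ ‖(x, y)‖ ^ 2 := by
    simpa [sq_abs] using pow_le_pow_left₀ (norm_nonneg _) (norm_snd_le (x, y)) 2
  rw [sq (1 + ‖(x, y)‖ ^ 2)⁻¹]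
  gcongr

lemma integrable_schwartz_prod_of_integrable_inv_one_add_sq (F : 𝓢(ℝ × ℝ, E)) {μ ν : Measure ℝ}
    [SFinite ν] (hμ : Integrable (fun x : ℝ ↦ (1 + x ^ 2)⁻¹) μ)
    (hν : Integrable (fun y : ℝ ↦ (1 + y ^ 2)⁻¹) ν) : Integrable F (μ.prod ν) := by
  obtain ⟨C, -, hC⟩ := exists_norm_iteratedFDeriv_le_mul_inv_one_add_sq F 0
  refine ((hμ.mul_prod hν).const_mul C).mono' F.continuous.aestronglyMeasurable
    (.of_forall fun z ↦ ?_)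
  simpa using hC z.1 z.2

lemma norm_integral_prod_sub_smul_integral_prod_le {X Y : Type*} [MeasurableSpace X]
    [MeasurableSpace Y] {μ : Measure X} {ν ν' : Measure Y} [SFinite μ] [SFinite ν] [SFinite ν']
    {F : X × Y → E} (hF : Integrable F (μ.prod ν)) (hF' : Integrable F (μ.prod ν')) {c : ℝ}
    {w : X → ℝ} (hw : Integrable w μ)
    (hle : ∀ x, ‖∫ y, F (x, y) ∂ν - c • ∫ y, F (x, y) ∂ν'‖ ≤ w x) :
    ‖∫ z, F z ∂μ.prod ν - c • ∫ z, F z ∂μ.prod ν'‖ ≤ ∫ x, w x ∂μ := by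
  rw [integral_prod _ hF, integral_prod _ hF', ← integral_smul,
    ← integral_sub hF.integral_prod_left (hF'.integral_prod_left.fun_smul c)]
  exact norm_integral_le_of_norm_le hw (.of_forall hle)

variable [CompleteSpace E]

lemma exists_norm_integral_latticeMeasure_slice_sub_le (F : 𝓢(ℝ × ℝ, E)) {N : ℕ} (hN : 1 < N)
    (θ : ℝ) :
    ∃ C : ℝ, 0 ≤ C ∧ ∀ x B : ℝ, 0 < B →
      ‖∫ y, F (x, y) ∂latticeMeasure θ B - B • ∫ y, F (x, y)‖ ≤
        C * (B * B⁻¹ ^ N) * (1 + x ^ 2)⁻¹ := by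
  obtain ⟨C, hC, hderiv⟩ := exists_norm_iteratedFDeriv_le_mul_inv_one_add_sq F N
  refine ⟨(∑' n : ℤ, |1 / (n : ℝ) ^ N|) * (C * Real.pi), by positivity, fun x B hB ↦ ?_⟩
  have hderiv_integral : ∫ y, ‖iteratedDeriv N (schwartzSlice F x) y‖ ≤
      C * Real.pi * (1 + x ^ 2)⁻¹ := by
    calc ∫ y, ‖iteratedDeriv N (schwartzSlice F x) y‖
        ≤ ∫ y : ℝ, C * (1 + x ^ 2)⁻¹ * (1 + y ^ 2)⁻¹ := by
          refine integral_mono_of_nonneg (.of_forall fun _ ↦ norm_nonneg _)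
            (integrable_inv_one_add_sq.const_mul _) (.of_forall fun y ↦ ?_)
          dsimp only
          rw [← norm_iteratedFDeriv_eq_norm_iteratedDeriv, mul_assoc]
          exact (norm_iteratedFDeriv_schwartzSlice_le F x N y).trans (hderiv x y)
      _ = C * Real.pi * (1 + x ^ 2)⁻¹ := by
          rw [integral_const_mul, integral_univ_inv_one_add_sq]
          ring
  calc ‖∫ y, F (x, y) ∂latticeMeasure θ B - B • ∫ y, F (x, y)‖
      = ‖∫ y, schwartzSlice F x y ∂latticeMeasure θ B - B • ∫ y, schwartzSlice F x y‖ := by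
        simp only [schwartzSlice_apply]
    _ ≤ (∑' n : ℤ, |1 / (n : ℝ) ^ N|) * (B * B⁻¹ ^ N) *
        ∫ y, ‖iteratedDeriv N (schwartzSlice F x) y‖ :=
        norm_integral_latticeMeasure_sub_smul_integral_le (schwartzSlice F x) hN θ hB
    _ ≤ (∑' n : ℤ, |1 / (n : ℝ) ^ N|) * (B * B⁻¹ ^ N) * (C * Real.pi * (1 + x ^ 2)⁻¹) := by
        gcongr
    _ = _ := by ring

lemma exists_norm_integral_prod_latticeMeasure_sub_le (F : 𝓢(ℝ × ℝ, E)) {N : ℕ} (hN : 1 < N)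
    (θ : ℝ) :
    ∃ C : ℝ, 0 ≤ C ∧ ∀ (μ : Measure ℝ) [SFinite μ],
      Integrable (fun x : ℝ ↦ (1 + x ^ 2)⁻¹) μ → ∀ B : ℝ, 0 < B →
      ‖∫ z, F z ∂μ.prod (latticeMeasure θ B) - B • ∫ z, F z ∂μ.prod volume‖ ≤
        C * (B * B⁻¹ ^ N) * ∫ x, (1 + x ^ 2)⁻¹ ∂μ := by
  obtain ⟨C, hC, hle⟩ := exists_norm_integral_latticeMeasure_slice_sub_le F hN θ
  refine ⟨C, hC, fun μ _ hμ B hB ↦ ?_⟩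
  rw [← integral_const_mul]
  exact norm_integral_prod_sub_smul_integral_prod_le
    (integrable_schwartz_prod_of_integrable_inv_one_add_sq F hμ
      (integrable_inv_one_add_sq_latticeMeasure θ hB.ne'))
    (integrable_schwartz_prod_of_integrable_inv_one_add_sq F hμ integrable_inv_one_add_sq)
    (hμ.const_mul _) fun x ↦ hle x B hB

lemma exists_norm_integral_latticeMeasure_prod_sub_le (F : 𝓢(ℝ × ℝ, E)) {N : ℕ} (hN : 1 < N)
    (θ₁ θ₂ : ℝ) :
    ∃ C : ℝ, 0 ≤ C ∧ ∀ A B : ℝ, 0 < A → 0 < B →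
      ‖∫ z, F z ∂(latticeMeasure θ₁ A).prod (latticeMeasure θ₂ B) - (A * B) • ∫ z, F z‖ ≤
        C * ((1 + A ^ 2) * (B * B⁻¹ ^ N) + B * (A * A⁻¹ ^ N)) := by
  set F' := SchwartzMap.compCLMOfContinuousLinearEquiv ℝ
    (ContinuousLinearEquiv.prodComm ℝ ℝ ℝ) F
  obtain ⟨C₁, hC₁, hle₁⟩ := exists_norm_integral_prod_latticeMeasure_sub_le F' hN θ₁
  obtain ⟨C₂, hC₂, hle₂⟩ := exists_norm_integral_prod_latticeMeasure_sub_le F hN θ₂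
  set K := ∑' n : ℤ, (1 + (n + θ₁) ^ 2)⁻¹
  refine ⟨C₂ * K + C₁ * Real.pi, by positivity, fun A B hA hB ↦ ?_⟩
  set S := ∫ z, F z ∂(latticeMeasure θ₁ A).prod (latticeMeasure θ₂ B)
  set T := ∫ z, F z ∂(latticeMeasure θ₁ A).prod volume
  have hfst : ‖T - A • ∫ z, F z‖ ≤ C₁ * (A * A⁻¹ ^ N) * Real.pi := by
    have hswap (μ : Measure ℝ) [SFinite μ] : ∫ z, F' z ∂volume.prod μ = ∫ z, F z ∂μ.prod volume :=
      integral_prod_swap F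
    simpa only [hswap, integral_univ_inv_one_add_sq, Measure.volume_eq_prod] using
      hle₁ volume integrable_inv_one_add_sq A hA
  have hsnd : ‖S - B • T‖ ≤ C₂ * (B * B⁻¹ ^ N) * ((1 + A ^ 2) * K) :=
    (hle₂ _ (integrable_inv_one_add_sq_latticeMeasure θ₁ hA.ne') B hB).trans <| by
      gcongr
      exact integral_inv_one_add_sq_latticeMeasure_le θ₁ hA.ne'
  calc ‖S - (A * B) • ∫ z, F z‖ = ‖(S - B • T) + B • (T - A • ∫ z, F z)‖ := by
        congr 1
        module
    _ ≤ C₂ * (B * B⁻¹ ^ N) * ((1 + A ^ 2) * K) + B * (C₁ * (A * A⁻¹ ^ N) * Real.pi) := by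
        refine (norm_add_le _ _).trans (add_le_add hsnd ?_)
        rw [norm_smul, Real.norm_of_nonneg hB.le]
        gcongr
    _ ≤ _ := by
        have : 0 ≤ C₂ * K * (B * (A * A⁻¹ ^ N)) := by positivity
        have : 0 ≤ C₁ * Real.pi * ((1 + A ^ 2) * (B * B⁻¹ ^ N)) := by positivity
        linarith

lemma hasSum_latticeMeasure_prod (F : 𝓢(ℝ × ℝ, E)) (θ₁ θ₂ : ℝ) {A B : ℝ} (hA : A ≠ 0) (hB : B ≠ 0) :
    HasSum (fun p : ℤ × ℤ ↦ F ((p.1 + θ₁) / A, (p.2 + θ₂) / B))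
      (∫ z, F z ∂(latticeMeasure θ₁ A).prod (latticeMeasure θ₂ B)) := by
  have hint := integrable_schwartz_prod_of_integrable_inv_one_add_sq F
    (integrable_inv_one_add_sq_latticeMeasure θ₁ hA)
    (integrable_inv_one_add_sq_latticeMeasure θ₂ hB)
  rw [latticeMeasure_prod] at hint ⊢
  exact hasSum_of_integrable_map_count hint

lemma exists_norm_integral_latticeMeasure_prod_dilate_sub_le (F : 𝓢(ℝ × ℝ, E)) (θ₁ θ₂ : ℝ)
    {a b : ℝ} (ha : 0 < a) (hb : 0 < b) (k : ℝ) :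
    ∃ C : ℝ, ∀ Λ : ℝ, 1 ≤ Λ →
      ‖∫ z, F z ∂(latticeMeasure θ₁ (Λ * a)).prod (latticeMeasure θ₂ (Λ * b)) -
        (Λ * a * (Λ * b)) • ∫ z, F z‖ ≤ C * Λ ^ (-k) := by
  obtain ⟨C, hC, hle⟩ := exists_norm_integral_latticeMeasure_prod_sub_le F
    (N := ⌈k⌉₊ + 3) (by lia) θ₁ θ₂
  set N := ⌈k⌉₊ + 3
  refine ⟨C * ((1 + a ^ 2) * (b * b⁻¹ ^ N) + b * (a * a⁻¹ ^ N)), fun Λ hΛ ↦ ?_⟩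
  have hΛ_pos : 0 < Λ := by positivity
  have hdecay : Λ ^ 3 * Λ⁻¹ ^ N ≤ Λ ^ (-k) := by
    rw [pow_add, mul_left_comm, ← mul_pow, mul_inv_cancel₀ hΛ_pos.ne', one_pow, mul_one, inv_pow,
      ← Real.rpow_natCast, ← Real.rpow_neg hΛ_pos.le]
    exact Real.rpow_le_rpow_of_exponent_le hΛ (neg_le_neg (Nat.le_ceil k))
  have hsq : 1 + (Λ * a) ^ 2 ≤ Λ ^ 2 * (1 + a ^ 2) := by nlinarith
  calc _ ≤ C * ((1 + (Λ * a) ^ 2) * (Λ * b * (Λ * b)⁻¹ ^ N) +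
        Λ * b * (Λ * a * (Λ * a)⁻¹ ^ N)) := hle _ _ (by positivity) (by positivity)
    _ ≤ C * (Λ ^ 2 * (1 + a ^ 2) * (Λ * b * (Λ * b)⁻¹ ^ N) +
        Λ * (Λ * b * (Λ * a * (Λ * a)⁻¹ ^ N))) := by
      gcongr _ * (?_ + ?_)
      · gcongr
      · exact le_mul_of_one_le_left (by positivity) hΛ
    _ = C * ((1 + a ^ 2) * (b * b⁻¹ ^ N) + b * (a * a⁻¹ ^ N)) * (Λ ^ 3 * Λ⁻¹ ^ N) := by
      simp only [mul_inv, mul_pow]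
      ring
    _ ≤ _ := by gcongr

end Plane

section Radial

variable {E : Type*} [NormedAddCommGroup E] [NormedSpace ℝ E]

lemma hasTemperateGrowth_sq_add_sq :
    (fun z : ℝ × ℝ ↦ z.1 ^ 2 + z.2 ^ 2).HasTemperateGrowth :=
  ((ContinuousLinearMap.fst ℝ ℝ ℝ).hasTemperateGrowth.pow 2).add
    ((ContinuousLinearMap.snd ℝ ℝ ℝ).hasTemperateGrowth.pow 2)

lemma norm_le_one_add_norm_sq_add_sq (z : ℝ × ℝ) : ‖z‖ ≤ 1 + ‖z.1 ^ 2 + z.2 ^ 2‖ := by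
  rw [Real.norm_of_nonneg (by positivity), Prod.norm_def]
  refine max_le ?_ ?_ <;> rw [Real.norm_eq_abs, abs_le] <;> constructor <;>
    nlinarith [sq_nonneg (z.1 - 1), sq_nonneg (z.1 + 1), sq_nonneg (z.2 - 1), sq_nonneg (z.2 + 1)]

/-- The Schwartz function `(x, y) ↦ xᵐ h(x² + y²)` on the plane. The cases `m = 0` and
`m = 2` make up the spectral trace. -/
noncomputable def fstPowSMulRadial (m : ℕ) (h : 𝓢(ℝ, E)) : 𝓢(ℝ × ℝ, E) :=
  SchwartzMap.smulLeftCLM E (fun z : ℝ × ℝ ↦ z.1 ^ m) <|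
    SchwartzMap.compCLM ℝ hasTemperateGrowth_sq_add_sq
      ⟨1, 1, fun z ↦ by simpa using norm_le_one_add_norm_sq_add_sq z⟩ h

@[simp]
lemma fstPowSMulRadial_apply (m : ℕ) (h : 𝓢(ℝ, E)) (z : ℝ × ℝ) :
    fstPowSMulRadial m h z = z.1 ^ m • h (z.1 ^ 2 + z.2 ^ 2) :=
  SchwartzMap.smulLeftCLM_apply_apply ((ContinuousLinearMap.fst ℝ ℝ ℝ).hasTemperateGrowth.pow m) _ z

lemma integral_fst_pow_smul_comp_sq_add_sq (m : ℕ) (f : ℝ → E) :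
    ∫ z : ℝ × ℝ, z.1 ^ m • f (z.1 ^ 2 + z.2 ^ 2) =
      (∫ θ in -Real.pi..Real.pi, Real.cos θ ^ m) • ∫ ρ in Ioi (0 : ℝ), ρ ^ (m + 1) • f (ρ ^ 2) := by
  have hpolar (p : ℝ × ℝ) : p.1 • (polarCoord.symm p).1 ^ m •
      f ((polarCoord.symm p).1 ^ 2 + (polarCoord.symm p).2 ^ 2) =
      Real.cos p.2 ^ m • p.1 ^ (m + 1) • f (p.1 ^ 2) := by
    have hradius : (p.1 * Real.cos p.2) ^ 2 + (p.1 * Real.sin p.2) ^ 2 = p.1 ^ 2 := by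
      rw [mul_pow, mul_pow, ← mul_add, Real.cos_sq_add_sin_sq, mul_one]
    simp only [polarCoord_symm_apply, hradius]
    module
  rw [← integral_comp_polarCoord_symm, polarCoord_target, Measure.volume_eq_prod,
    ← Measure.prod_restrict, ← integral_prod_swap, intervalIntegral.integral_of_le
      (by linarith [Real.pi_pos]), integral_Ioc_eq_integral_Ioo, ← integral_prod_smul]
  exact integral_congr_ae (.of_forall fun p ↦ hpolar p.swap)

lemma integral_fstPowSMulRadial_zero (h : 𝓢(ℝ, E)) :
    ∫ z, fstPowSMulRadial 0 h z = (2 * Real.pi) • ∫ ρ in Ioi (0 : ℝ), ρ • h (ρ ^ 2) := by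
  simp only [fstPowSMulRadial_apply, integral_fst_pow_smul_comp_sq_add_sq]
  simp [two_mul]

lemma integral_fstPowSMulRadial_two (h : 𝓢(ℝ, E)) :
    ∫ z, fstPowSMulRadial 2 h z = Real.pi • ∫ ρ in Ioi (0 : ℝ), ρ ^ 3 • h (ρ ^ 2) := by
  have hcos : ∫ θ in -Real.pi..Real.pi, Real.cos θ ^ 2 = Real.pi := by
    rw [integral_cos_sq]
    simp
  simp only [fstPowSMulRadial_apply, integral_fst_pow_smul_comp_sq_add_sq, hcos, Nat.reduceAdd]

end Radial

section SpectralAction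

variable {E : Type*} [NormedAddCommGroup E] [NormedSpace ℝ E]

lemma multiplicity_smul_eq (h : 𝓢(ℝ, E)) {A B : ℝ} (hA : A ≠ 0) (n m : ℤ) :
    (2 * (n : ℝ) * ((n : ℝ) + 1)) • h (((n : ℝ) + 1 / 2) ^ 2 * A ^ (-2 : ℤ)
      + ((m : ℝ) + 1 / 2) ^ 2 * B ^ (-2 : ℤ)) =
    (2 * A ^ 2) • fstPowSMulRadial 2 h ((n + 1 / 2) / A, (m + 1 / 2) / B) -
      (1 / 2 : ℝ) • fstPowSMulRadial 0 h ((n + 1 / 2) / A, (m + 1 / 2) / B) := by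
  have hmul : 2 * (n : ℝ) * (n + 1) = 2 * A ^ 2 * ((n + 1 / 2) / A) ^ 2 - 1 / 2 := by
    field_simp
    ring
  have harg (t C : ℝ) : t ^ 2 * C ^ (-2 : ℤ) = (t / C) ^ 2 := by
    rw [zpow_neg, div_pow, div_eq_mul_inv]
    norm_cast
  simp only [fstPowSMulRadial_apply, pow_zero, one_smul, smul_smul, harg, hmul, sub_smul]

variable [CompleteSpace E]

lemma tsum_multiplicity_smul_eq (h : 𝓢(ℝ, E)) {A B : ℝ} (hA : A ≠ 0) (hB : B ≠ 0) :
    ∑' p : ℤ × ℤ, (2 * (p.1 : ℝ) * ((p.1 : ℝ) + 1)) •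
      h (((p.1 : ℝ) + 1 / 2) ^ 2 * A ^ (-2 : ℤ) + ((p.2 : ℝ) + 1 / 2) ^ 2 * B ^ (-2 : ℤ)) =
    (2 * A ^ 2) • (∫ z, fstPowSMulRadial 2 h z
        ∂(latticeMeasure (1 / 2) A).prod (latticeMeasure (1 / 2) B)) -
      (1 / 2 : ℝ) • (∫ z, fstPowSMulRadial 0 h z
        ∂(latticeMeasure (1 / 2) A).prod (latticeMeasure (1 / 2) B)) := by
  simp only [multiplicity_smul_eq h hA]
  exact (((hasSum_latticeMeasure_prod _ _ _ hA hB).const_smul _).sub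
    ((hasSum_latticeMeasure_prod _ _ _ hA hB).const_smul _)).tsum_eq

theorem spectral_action_S3xS1_general (h : 𝓢(ℝ, E)) {a β : ℝ} (ha : 0 < a) (hβ : 0 < β) (k : ℝ) :
    ∃ C : ℝ, ∀ Λ : ℝ, 1 ≤ Λ →
      ‖(∑' p : ℤ × ℤ, (2 * (p.1 : ℝ) * ((p.1 : ℝ) + 1)) •
            h (((p.1 : ℝ) + 1 / 2) ^ 2 * (Λ * a) ^ (-2 : ℤ)
                + ((p.2 : ℝ) + 1 / 2) ^ 2 * (Λ * β) ^ (-2 : ℤ)))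
          - ((2 * Real.pi * Λ ^ 4 * β * a ^ 3) • (∫ ρ in Ioi (0 : ℝ), ρ ^ 3 • h (ρ ^ 2))
              - (Real.pi * Λ ^ 2 * β * a) • (∫ ρ in Ioi (0 : ℝ), ρ • h (ρ ^ 2)))‖ ≤
        C * Λ ^ (-k) := by
  obtain ⟨C₀, hC₀⟩ := exists_norm_integral_latticeMeasure_prod_dilate_sub_le
    (fstPowSMulRadial 0 h) (1 / 2) (1 / 2) ha hβ k
  obtain ⟨C₂, hC₂⟩ := exists_norm_integral_latticeMeasure_prod_dilate_sub_le
    (fstPowSMulRadial 2 h) (1 / 2) (1 / 2) ha hβ (k + 2)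
  rw [integral_fstPowSMulRadial_zero] at hC₀
  rw [integral_fstPowSMulRadial_two] at hC₂
  refine ⟨2 * a ^ 2 * C₂ + 1 / 2 * C₀, fun Λ hΛ ↦ ?_⟩
  have hΛ_pos : 0 < Λ := by positivity
  have hpow : Λ ^ 2 * Λ ^ (-(k + 2)) = Λ ^ (-k) := by
    rw [← Real.rpow_two, ← Real.rpow_add hΛ_pos]
    ring_nf
  rw [tsum_multiplicity_smul_eq h (mul_pos hΛ_pos ha).ne' (mul_pos hΛ_pos hβ).ne']
  set μ := (latticeMeasure (1 / 2) (Λ * a)).prod (latticeMeasure (1 / 2) (Λ * β))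
  set I₁ := ∫ ρ in Ioi (0 : ℝ), ρ • h (ρ ^ 2)
  set I₃ := ∫ ρ in Ioi (0 : ℝ), ρ ^ 3 • h (ρ ^ 2)
  calc _ = ‖(2 * (Λ * a) ^ 2) •
        (∫ z, fstPowSMulRadial 2 h z ∂μ - (Λ * a * (Λ * β)) • Real.pi • I₃) -
        (1 / 2 : ℝ) • (∫ z, fstPowSMulRadial 0 h z ∂μ -
          (Λ * a * (Λ * β)) • (2 * Real.pi) • I₁)‖ := by
        congr 1
        module
    _ ≤ 2 * (Λ * a) ^ 2 * (C₂ * Λ ^ (-(k + 2))) + 1 / 2 * (C₀ * Λ ^ (-k)) := by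
        refine (norm_sub_le _ _).trans ?_
        rw [norm_smul_of_nonneg (by positivity), norm_smul_of_nonneg (by positivity)]
        gcongr
        exacts [hC₂ Λ hΛ, hC₀ Λ hΛ]
    _ = _ := by rw [← hpow]; ring

end SpectralAction

/-- Spectral action on `S³_a × S¹_β`: for a Schwartz function `h` and every
`k > 0`, `Tr(h(D²/Λ²)) = 2πΛ⁴βa³ ∫_0^∞ h(ρ²)ρ³ dρ - πΛ²βa ∫_0^∞ h(ρ²)ρ dρ + O(Λ^{-k})`. -/
theorem spectral_action_S3xS1 (h : SchwartzMap ℝ ℝ) (a β : ℝ)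
    (ha : 0 < a) (hβ : 0 < β) (k : ℝ) (hk : 0 < k) :
    ∃ C : ℝ, ∀ Λ : ℝ, 1 ≤ Λ →
      |(∑' p : ℤ × ℤ, 2 * (p.1 : ℝ) * ((p.1 : ℝ) + 1) *
            h (((p.1 : ℝ) + 1 / 2) ^ 2 * (Λ * a) ^ (-2 : ℤ)
                + ((p.2 : ℝ) + 1 / 2) ^ 2 * (Λ * β) ^ (-2 : ℤ)))
          - (2 * Real.pi * Λ ^ 4 * β * a ^ 3 * (∫ ρ in Set.Ioi (0 : ℝ), h (ρ ^ 2) * ρ ^ 3)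
              - Real.pi * Λ ^ 2 * β * a * (∫ ρ in Set.Ioi (0 : ℝ), h (ρ ^ 2) * ρ))| ≤
        C * Λ ^ (-k) := by
  simpa only [smul_eq_mul, mul_comm (h _), Real.norm_eq_abs] using
    spectral_action_S3xS1_general h ha hβ k
end
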